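/- Let A ⊆ B be topological spaces such that: (i) the inclusion A → B is a cofibration; (ii) the first-coordinate projection pr₁ : {(b,b') ∈ B × B : b ≠ b'} → B is a Hurewicz fibration; and (iii) the first-coordinate projection pr₁ : {(a,a') ∈ A × A : a ≠ a'} → A is a Hurewicz fibration (conditions that hold when A ⊆ B are closed smooth manifolds). Let f : B → B be continuous with f(A) ⊆ A, and let Γ_f : B → B × B denote the graph map Γ_f(b) = (b, f(b)). Then the following are equivalent: (1) there is a homotopy H : B × [0,1] → B with H(·,0) = f, H(A × [0,1]) ⊆ A, and H(b,1) ≠ b for all b ∈ B; (2) there is a continuous map k : B → B × B ∖ Δ_B with k(A) ⊆ A × A ∖ Δ_A, together with a homotopy K : B × [0,1] → B × B from k (composed with the inclusion B × B ∖ Δ_B ⊆ B × B) to Γ_f satisfying K(A × [0,1]) ⊆ A × A. -/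

import Mathlib

open unitInterval

universe u

/-- The homotopy extension property: the inclusion `A ⊆ B` is a cofibration. -/
def IsCofibration {B : Type*} [TopologicalSpace B] (A : Set B) : Prop :=
  ∀ (Y : Type u) [TopologicalSpace Y] (g : C(B, Y)) (G : C(A × unitInterval, Y)),
    (∀ a : A, G (a, 0) = g a) →
    ∃ Gext : C(B × unitInterval, Y),
      (∀ b, Gext (b, 0) = g b) ∧ ∀ (a : A) (t : unitInterval), Gext (↑a, t) = G (a, t)

/-- The homotopy lifting property with respect to all spaces: `p` is a Hurewicz fibration. -/
def IsHurewiczFibration {E Y : Type*} [TopologicalSpace E] [TopologicalSpace Y] (p : E → Y) :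
    Prop :=
  ∀ (X : Type u) [TopologicalSpace X] (H : C(X × unitInterval, Y)) (h : C(X, E)),
    (∀ x, p (h x) = H (x, 0)) →
    ∃ Hlift : C(X × unitInterval, E), (∀ z, p (Hlift z) = H z) ∧ ∀ x, Hlift (x, 0) = h x

/-- The complement of the diagonal in `B × B`, as a topological subspace. -/
abbrev OffDiag (B : Type*) [TopologicalSpace B] : Type _ := {x : B × B // x.1 ≠ x.2}


theorem step1 {B : Type u} [TopologicalSpace B] (A : Set B)
    (hcofib : IsCofibration.{u} A)
    (hfibA : IsHurewiczFibration.{u}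
      (fun x : {y : A × A // y.1 ≠ y.2} => x.1.1))
    (f : C(B, B)) (k : C(B, OffDiag B))
    (hk : ∀ a ∈ A, ((k a : B × B).1 ∈ A ∧ (k a : B × B).2 ∈ A))
    (K : C(B × unitInterval, B × B))
    (hK0 : ∀ b, K (b, 0) = (k b : B × B))
    (hK1 : ∀ b, K (b, 1) = (b, f b))
    (hKA : ∀ a ∈ A, ∀ t : unitInterval, ((K (a, t)).1 ∈ A ∧ (K (a, t)).2 ∈ A)) :
    ∃ K : C(B × unitInterval, B × B), (∀ b, (K (b, 0)).1 ≠ (K (b, 0)).2) ∧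
      (∀ b, K (b, 1) = (b, f b)) ∧
      ∀ a ∈ A, ∀ t, (K (a, t)).1 = a ∧ (K (a, t)).2 ∈ A := by
  -- lift the first coordinate of `K` over `A`
  obtain ⟨L, hL, hL0⟩ := hfibA A
    ⟨fun z => ⟨(K ((z.1 : B), z.2)).1, (hKA _ z.1.2 _).1⟩, by fun_prop⟩
    ⟨fun a => ⟨(⟨(k a : B × B).1, (hk a a.2).1⟩, ⟨(k a : B × B).2, (hk a a.2).2⟩),
      fun h => (k a).2 (congrArg Subtype.val h)⟩, by fun_prop⟩
    (by intro a; simp [hK0])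
  have hL' : ∀ (a : A) t, ((L (a, t)).1.1 : B) = (K ((a : B), t)).1 := fun a t =>
    congrArg Subtype.val (hL (a, t))
  have hL0' : ∀ (a : A), ((L (a, 0)).1.2 : B) = (k a : B × B).2 := fun a => by
    rw [hL0]; rfl
  let pr : ℝ → unitInterval := Set.projIcc 0 1 zero_le_one
  have hpr : Continuous pr := continuous_projIcc
  have pr0 : ∀ x ≤ 0, pr x = 0 := fun x hx => Set.projIcc_of_le_left _ hx
  have pr1 : ∀ x, 1 ≤ x → pr x = 1 := fun x hx => Set.projIcc_of_right_le _ hx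
  have prv : ∀ x : unitInterval, pr x = x := fun x => Set.projIcc_val _ x
  let P : (A × unitInterval) × unitInterval → B := fun z =>
    if (1 + (z.1.2 : ℝ)) * z.2 ≤ z.1.2 then
      ((L (z.1.1, pr (z.1.2 - (1 + (z.1.2 : ℝ)) * z.2))).1.2 : B)
    else (K ((z.1.1 : B), pr ((1 + (z.1.2 : ℝ)) * z.2 - z.1.2))).2
  have hP : Continuous P := by
    refine Continuous.if_le (by fun_prop) (by fun_prop) (by fun_prop) (by fun_prop) ?_
    intro z hz
    rw [hz, sub_self, pr0 0 le_rfl, hL0', hK0]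
  have hPA : ∀ z, P z ∈ A := by
    intro z
    simp only [P]
    split_ifs
    · exact Subtype.property _
    · exact (hKA _ z.1.1.2 _).2
  let Γ : C((A × unitInterval) × unitInterval, B × B) :=
    ⟨fun z => ((K ((z.1.1 : B), max z.2 z.1.2)).1, P z), by fun_prop⟩
  have hΓ0 : ∀ a t, Γ ((a, t), 0) = ((K ((a : B), t)).1, ((L (a, t)).1.2 : B)) := by
    intro a t
    have : P ((a, t), 0) = ((L (a, t)).1.2 : B) := by
      simp [P, t.2.1, prv]
    simp [Γ, this]
  have hΓ1 : ∀ a t, Γ ((a, t), 1) = ((a : B), f a) := by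
    intro a t
    have : P ((a, t), 1) = f a := by
      simp [P, pr1, hK1]
    have h1 : max (1 : unitInterval) t = 1 := max_eq_left t.2.2
    simp [Γ, this, h1, hK1]
  have hΓt0 : ∀ a s, Γ ((a, 0), s) = K ((a : B), s) := by
    intro a s
    have : P ((a, 0), s) = (K ((a : B), s)).2 := by
      simp only [P]
      split_ifs with h
      · have hs : s = 0 := by
          apply Subtype.ext
          apply le_antisymm _ s.2.1
          simpa using h
        subst hs
        simp [hK0, pr0, hL0']
      · simp [prv]
    have h1 : max s (0 : unitInterval) = s := max_eq_left s.2.1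
    simp [Γ, this, h1]
  have hΓt1 : ∀ a s, (Γ ((a, 1), s)).1 = (a : B) := by
    intro a s
    have h1 : max s (1 : unitInterval) = 1 := max_eq_right s.2.2
    simp [Γ, h1, hK1]
  obtain ⟨G, hG0, hGA⟩ := hcofib {γ : C(unitInterval, B × B) // (γ 0).1 ≠ (γ 0).2}
    ⟨fun b => ⟨K.curry b, by
      simp only [ContinuousMap.curry_apply, hK0]; exact (k b).2⟩, by fun_prop⟩
    ⟨fun z => ⟨Γ.curry z, by
      obtain ⟨a, t⟩ := z
      simp only [ContinuousMap.curry_apply, hΓ0, ← hL']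
      exact fun h => (L (a, t)).2 (Subtype.ext h)⟩, by fun_prop⟩
    (by
      intro a
      apply Subtype.ext
      ext1 s
      exact hΓt0 a s)
  have hGA' : ∀ (a : A) t s, (G ((a : B), t)).1 s = Γ ((a, t), s) := by
    intro a t s
    rw [hGA]; rfl
  have hG0' : ∀ b s, (G (b, 0)).1 s = K (b, s) := by
    intro b s
    rw [hG0]; rfl
  refine ⟨⟨fun z => (G (z.1, pr (2 - 2 * z.2))).1 (pr (2 * z.2)), by fun_prop⟩, ?_, ?_, ?_⟩
  · intro b
    have := (G (b, pr 2)).2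
    simpa [pr0] using this
  · intro b
    simp [pr0, pr1, hG0', hK1]
  · intro a ha t
    have key := hGA' ⟨a, ha⟩ (pr (2 - 2 * t)) (pr (2 * t))
    simp only at key
    simp only [ContinuousMap.coe_mk]
    rw [key]
    refine ⟨?_, hPA _⟩
    rcases le_total (t : ℝ) (1 / 2) with h | h
    · rw [pr1 (2 - 2 * t) (by linarith), hΓt1]
    · rw [pr1 (2 * t) (by linarith), hΓ1]

theorem step2 {B : Type u} [TopologicalSpace B] (A : Set B)
    (hcofib : IsCofibration.{u} A)
    (hfibB : IsHurewiczFibration.{u} (fun x : OffDiag B => x.1.1))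
    (f : C(B, B)) (K₀ : C(B × unitInterval, B × B))
    (h0 : ∀ b, (K₀ (b, 0)).1 ≠ (K₀ (b, 0)).2)
    (h1 : ∀ b, K₀ (b, 1) = (b, f b))
    (hA : ∀ a ∈ A, ∀ t, (K₀ (a, t)).1 = a ∧ (K₀ (a, t)).2 ∈ A) :
    ∃ H : C(B × unitInterval, B),
        (∀ b, H (b, 0) = f b) ∧
        (∀ a ∈ A, ∀ t : unitInterval, H (a, t) ∈ A) ∧
        (∀ b, H (b, 1) ≠ b) := by
  -- a retraction onto `B × 0 ∪ A × I`
  obtain ⟨r, hr0, hrA⟩ := hcofib {z : B × unitInterval // z.2 = 0 ∨ z.1 ∈ A}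
    ⟨fun b => ⟨(b, 0), Or.inl rfl⟩, by fun_prop⟩
    ⟨fun z => ⟨((z.1 : B), z.2), Or.inr z.1.2⟩, by fun_prop⟩
    (by intro a; rfl)
  let ψ : C(B × unitInterval, B) := ⟨fun z => (r z).1.1, by fun_prop⟩
  let χ : C(B, ℝ) := ⟨fun b => ((r (b, 1)).1.2 : ℝ), by fun_prop⟩
  have ψ0 : ∀ b, ψ (b, 0) = b := fun b => by simp [ψ, hr0]
  have ψA : ∀ a ∈ A, ∀ t, ψ (a, t) = a := fun a ha t => by
    have := hrA ⟨a, ha⟩ t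
    simp only at this
    simp [ψ, this]
  have χA : ∀ a ∈ A, χ a = 1 := fun a ha => by
    have := hrA ⟨a, ha⟩ 1
    simp only at this
    simp [χ, this]
  have hχ : ∀ b, 0 < χ b → ψ (b, 1) ∈ A := fun b hb => by
    rcases (r (b, 1)).2 with h | h
    · simp [χ, h] at hb
    · exact h
  let K : C(B × unitInterval, B × B) :=
    ⟨fun z => K₀ (ψ (z.1, unitInterval.symm z.2), z.2), by fun_prop⟩
  have hK0 : ∀ b, K (b, 0) = K₀ (ψ (b, 1), 0) := fun b => by simp [K]
  have hK1 : ∀ b, K (b, 1) = (b, f b) := fun b => by simp [K, ψ0, h1]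
  have hKA : ∀ a ∈ A, ∀ t, (K (a, t)).1 = a ∧ (K (a, t)).2 ∈ A := fun a ha t => by
    simpa [K, ψA a ha] using hA a ha t
  let q : C(B, B) := ⟨fun b => (K (b, 0)).2, by fun_prop⟩
  let R : C(B × unitInterval, B) := ⟨fun z => (K (z.1, unitInterval.symm z.2)).1, by fun_prop⟩
  have R0 : ∀ b, R (b, 0) = b := fun b => by simp [R, hK1]
  have R1 : ∀ b, R (b, 1) = (K (b, 0)).1 := fun b => by simp [R]
  have RA : ∀ a ∈ A, ∀ t, R (a, t) = a := fun a ha t => (hKA a ha _).1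
  have qA : ∀ a ∈ A, q a ∈ A := fun a ha => (hKA a ha _).2
  -- near `A`, the map `q` has no fixed points
  have hq : ∀ b, 0 < χ b → b ≠ q b := by
    intro b hb
    by_cases hbA : b ∈ A
    · have h := h0 b
      rw [(hA b hbA 0).1] at h
      simpa [q, hK0, ψA b hbA] using h
    · intro h
      apply hbA
      rw [h]
      change (K (b, 0)).2 ∈ A
      rw [hK0]
      exact (hA _ (hχ b hb) 0).2
  have hqR : ∀ b, 0 < χ b → q (R (b, 1)) = q b := by
    intro b hb
    have hm := hχ b hb
    rw [R1, hK0, (hA _ hm 0).1]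
    simp only [q, ContinuousMap.coe_mk, hK0, ψA _ hm]
  let m : B → ℝ := fun b => sInf ((fun s => χ (R (b, s))) '' Set.univ)
  have hm : Continuous m := by
    have := IsCompact.continuous_sInf (K := (Set.univ : Set unitInterval)) isCompact_univ
      (f := fun b s => χ (R (b, s))) (χ.continuous.comp R.continuous)
    exact this
  have hmle : ∀ b s, m b ≤ χ (R (b, s)) := by
    intro b s
    apply csInf_le
    · exact (isCompact_univ.image (by fun_prop)).bddBelow
    · exact ⟨s, trivial, rfl⟩
  have hmA : ∀ a ∈ A, m a = 1 := by
    intro a ha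
    simp [m, RA a ha, χA a ha]
  let θ : C(B, unitInterval) :=
    ⟨fun b => Set.projIcc 0 1 zero_le_one (2 - 2 * m b), continuous_projIcc.comp (by fun_prop)⟩
  have θA : ∀ a ∈ A, θ a = 0 := fun a ha =>
    Set.projIcc_of_le_left zero_le_one (by rw [hmA a ha]; norm_num)
  have θ1 : ∀ b, m b ≤ 1 / 2 → θ b = 1 := fun b hb =>
    Set.projIcc_of_right_le zero_le_one (by linarith)
  let C : C(B × unitInterval, B) :=
    ⟨fun z => if m z.1 ≤ 1 / 2 then q z.1 else q (R (z.1, max (θ z.1) z.2)), by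
      refine Continuous.if_le (by fun_prop) (by fun_prop) (by fun_prop) (by fun_prop) ?_
      intro z hz
      have hx : max (1 : unitInterval) z.2 = 1 := max_eq_left z.2.2.2
      rw [θ1 _ hz.le, hx, hqR]
      have := hmle z.1 0
      rw [R0] at this
      linarith⟩
  have hCA : ∀ a ∈ A, ∀ t, C (a, t) = q a := fun a ha t => by
    simp [C, RA a ha]
  have hC1 : ∀ b, C (b, 1) = q b := by
    intro b
    have hx : max (θ b) (1 : unitInterval) = 1 := max_eq_right (θ b).2.2
    simp only [C, ContinuousMap.coe_mk, hx]
    split_ifs with h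
    · rfl
    · apply hqR
      have := hmle b 0
      rw [R0] at this
      linarith
  have hC0 : ∀ b, R (b, θ b) ≠ C (b, 0) := by
    intro b
    have hx : max (θ b) (0 : unitInterval) = θ b := max_eq_left (θ b).2.1
    simp only [C, ContinuousMap.coe_mk, hx]
    split_ifs with h
    · rw [θ1 b h, R1]
      simp only [q, ContinuousMap.coe_mk, hK0]
      exact h0 _
    · apply hq
      have := hmle b (θ b)
      linarith
  -- push the map `(R (b, θ b), C (b, 0))` along `R` back to a section
  let D : C(B × unitInterval, unitInterval) :=
    ⟨fun z => Set.projIcc 0 1 zero_le_one ((θ z.1 : ℝ) - z.2),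
      continuous_projIcc.comp (by fun_prop)⟩
  have D0 : ∀ b, D (b, 0) = θ b := fun b => by
    simp [D]
  have D1 : ∀ b, D (b, θ b) = 0 := fun b => by
    simp [D]
  obtain ⟨Λ, hΛ, hΛ0⟩ := hfibB B ⟨fun z => R (z.1, D z), by fun_prop⟩
    ⟨fun b => ⟨(R (b, θ b), C (b, 0)), hC0 b⟩, by fun_prop⟩
    (by intro b; simp [D0])
  let P : C(B, B) → Prop := fun h => ∀ a ∈ A, h a ∈ A
  let c : C(B, B) := ⟨fun b => C (b, 0), by fun_prop⟩
  let g : C(B, B) := ⟨fun b => (Λ (b, θ b)).1.2, by fun_prop⟩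
  have H1 : ContinuousMap.HomotopicWith q f P :=
    ⟨{ toFun := fun z => (K (z.2, z.1)).2
       continuous_toFun := by fun_prop
       map_zero_left := fun b => rfl
       map_one_left := fun b => by simp [hK1]
       prop' := fun t a ha => (hKA a ha t).2 }⟩
  have H2 : ContinuousMap.HomotopicWith c q P :=
    ⟨{ toFun := fun z => C (z.2, z.1)
       continuous_toFun := by fun_prop
       map_zero_left := fun b => rfl
       map_one_left := fun b => hC1 b
       prop' := fun t a ha => by
         change C (a, t) ∈ A
         rw [hCA a ha]; exact qA a ha }⟩
  have H3 : ContinuousMap.HomotopicWith c g P :=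
    ⟨{ toFun := fun z => (Λ (z.2, min z.1 (θ z.2))).1.2
       continuous_toFun := by fun_prop
       map_zero_left := fun b => by
         have hx : min (0 : unitInterval) (θ b) = 0 := min_eq_left (θ b).2.1
         simp only [hx, hΛ0]; rfl
       map_one_left := fun b => by
         have hx : min (1 : unitInterval) (θ b) = θ b := min_eq_right (θ b).2.2
         simp only [hx]; rfl
       prop' := fun t a ha => by
         change (Λ (a, min t (θ a))).1.2 ∈ A
         have hx : min t (0 : unitInterval) = 0 := min_eq_right t.2.1
         rw [θA a ha, hx, hΛ0]
         change C (a, 0) ∈ A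
         rw [hCA a ha]; exact qA a ha }⟩
  obtain ⟨H⟩ := (H1.symm.trans H2.symm).trans H3
  refine ⟨⟨fun z => H (z.2, z.1), by fun_prop⟩, ?_, ?_, ?_⟩
  · intro b
    exact H.apply_zero b
  · intro a ha t
    exact H.prop t a ha
  · intro b
    have e : H (1, b) = (Λ (b, θ b)).1.2 := H.apply_one b
    have e2 : (Λ (b, θ b)).1.1 = b := by
      have := hΛ (b, θ b)
      simpa [D1, R0] using this
    change H (1, b) ≠ b
    rw [e]
    intro h
    exact (Λ (b, θ b)).2 (e2.trans h.symm)

/-- For a relative map `f : (B,A) → (B,A)`, with the inclusion `A ⊆ B` a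
cofibration and the first-coordinate projections of the deleted products of `B` and of `A`
Hurewicz fibrations, `f` is relatively homotopic to a fixed point free map if and only if its
graph `Γ_f` admits, up to relative homotopy, a relative lift to the complement of the
diagonal. -/
theorem stmt3 {B : Type u} [TopologicalSpace B] (A : Set B)
    (hcofib : IsCofibration.{u} A)
    (hfibB : IsHurewiczFibration.{u} (fun x : OffDiag B => x.1.1))
    (hfibA : IsHurewiczFibration.{u}
      (fun x : {y : A × A // y.1 ≠ y.2} => x.1.1))
    (f : C(B, B)) (hf : ∀ a ∈ A, f a ∈ A) :
    ((∃ H : C(B × unitInterval, B),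
        (∀ b, H (b, 0) = f b) ∧
        (∀ a ∈ A, ∀ t : unitInterval, H (a, t) ∈ A) ∧
        (∀ b, H (b, 1) ≠ b)) ↔
      (∃ k : C(B, OffDiag B),
        (∀ a ∈ A, ((k a : B × B).1 ∈ A ∧ (k a : B × B).2 ∈ A)) ∧
        ∃ K : C(B × unitInterval, B × B),
          (∀ b, K (b, 0) = (k b : B × B)) ∧
          (∀ b, K (b, 1) = (b, f b)) ∧
          (∀ a ∈ A, ∀ t : unitInterval, ((K (a, t)).1 ∈ A ∧ (K (a, t)).2 ∈ A)))) := by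
  constructor
  · rintro ⟨H, hH0, hHA, hH1⟩
    refine ⟨⟨fun b => ⟨(b, H (b, 1)), (hH1 b).symm⟩, by fun_prop⟩, ?_,
      ⟨fun z => (z.1, H (z.1, unitInterval.symm z.2)), by fun_prop⟩, ?_, ?_, ?_⟩
    · intro a ha
      exact ⟨ha, hHA a ha 1⟩
    · intro b; simp
    · intro b; simp [hH0]
    · intro a ha t
      exact ⟨ha, hHA a ha _⟩
  · rintro ⟨k, hk, K, hK0, hK1, hKA⟩
    obtain ⟨K', h0, h1, hA⟩ := step1 A hcofib hfibA f k hk K hK0 hK1 hKA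
    exact step2 A hcofib hfibB f K' h0 h1 hA
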